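/- Let G be a grid diagram of size n, and let ℓ be the number of orbits of the permutation σ_X^{-1} ∘ σ_O of ℤ/n (the number of components of the link presented by G). Let C̃(G) be the fully blocked grid complex: the ℤ/2-vector space with basis the generators of G, with differential ∂̃x = Σ_y Σ_r y, summing over empty rectangles r from x to y whose interior contains no O-marking and no X-marking. Then the ℤ/2-dimension of the homology H_*(C̃(G)) is divisible by 2^{n−ℓ}. -/

import Mathlib

/-!
STATEMENT 7. Let `G` be a grid diagram of size `n` and let `ℓ` be the number
of orbits of the permutation `σX⁻¹ ∘ σO` of `ZMod n` (the number of components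
of the link presented by `G`).  Let `C̃(G)` be the fully blocked grid complex:
the `ℤ/2`-vector space with basis the generators of `G`, with differential
`∂̃x = Σ_y Σ_r y`, the sum over empty rectangles `r` from `x` to `y` whose
interior contains no `O`-marking and no `X`-marking.  Then the `ℤ/2`-dimension
of the homology `H_*(C̃(G))` is divisible by `2^(n − ℓ)`.
-/

namespace GridDiagrams

attribute [local instance] Classical.propDecidable

variable {n : ℕ}

/-- `c` lies in the cyclic half-open interval `[a, b)` in `ZMod n`. -/
def cycIco (a b c : ZMod n) : Prop := (c - a).val < (b - a).val

/-- `c` lies in the open cyclic interval `(a, b)` in `ZMod n`. -/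
def cycIoo (a b c : ZMod n) : Prop := 0 < (c - a).val ∧ (c - a).val < (b - a).val

/-- The set of squares making up the rectangle determined by the generator `x`
and the ordered pair of columns `(a, b)`. -/
def rectSquares (x : Equiv.Perm (ZMod n)) (a b : ZMod n) : Set (ZMod n × ZMod n) :=
  {q | cycIco a b q.1 ∧ cycIco (x a) (x b) q.2}

/-- The lattice points in the open interior of the rectangle determined by `x`
and the ordered pair of columns `(a, b)`. -/
def rectInterior (x : Equiv.Perm (ZMod n)) (a b : ZMod n) : Set (ZMod n × ZMod n) :=
  {q | cycIoo a b q.1 ∧ cycIoo (x a) (x b) q.2}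

/-- The ordered pair `(a, b)` determines a rectangle from `x` to `y`. -/
def IsRect (x y : Equiv.Perm (ZMod n)) (a b : ZMod n) : Prop :=
  a ≠ b ∧ y = x * Equiv.swap a b

/-- The ordered pair `(a, b)` determines an empty rectangle from `x` to `y`. -/
def IsEmptyRect (x y : Equiv.Perm (ZMod n)) (a b : ZMod n) : Prop :=
  IsRect x y a b ∧ ∀ i : ZMod n, (i, x i) ∉ rectInterior x a b

/-- The fully blocked grid complex `C̃(G)`: the `ℤ/2`-vector space with basis
the generators of `G`. -/
abbrev TildeC (n : ℕ) := Equiv.Perm (ZMod n) →₀ ZMod 2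

/-- The value of the fully blocked differential on the generator `x`:
`∂̃x = Σ_y Σ_r y`, the sum over empty rectangles `r` from `x` to `y` whose
interior contains no `O`-marking and no `X`-marking. -/
noncomputable def tildeImage [NeZero n] (σO σX : Equiv.Perm (ZMod n))
    (x : Equiv.Perm (ZMod n)) : TildeC n :=
  ∑ y : Equiv.Perm (ZMod n), ∑ a : ZMod n, ∑ b : ZMod n,
    if IsEmptyRect x y a b ∧ (∀ i : ZMod n, (i, σO i) ∉ rectSquares x a b) ∧
        (∀ i : ZMod n, (i, σX i) ∉ rectSquares x a b)
    then Finsupp.single y (1 : ZMod 2) else 0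

/-- The fully blocked differential `∂̃` as a `ℤ/2`-linear endomorphism of
`C̃(G)`. -/
noncomputable def tildeDiff [NeZero n] (σO σX : Equiv.Perm (ZMod n)) :
    TildeC n →ₗ[ZMod 2] TildeC n :=
  Finsupp.lsum (ZMod 2) fun x =>
    LinearMap.toSpanSingleton (ZMod 2) (TildeC n) (tildeImage σO σX x)

/-- The orbit equivalence relation of a permutation `f` (two points are
equivalent iff they lie in the same orbit, i.e. the same cycle of `f`). -/
def orbitSetoid {α : Type*} (f : Equiv.Perm α) : Setoid α :=
  ⟨f.SameCycle, ⟨fun x => Equiv.Perm.SameCycle.refl f x, fun h => h.symm,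
    fun h₁ h₂ => h₁.trans h₂⟩⟩

/-- The number of orbits of a permutation `f`: for `f = σX⁻¹ ∘ σO` on a grid
diagram this is the number `ℓ` of components of the presented link. -/
noncomputable def numOrbits {α : Type*} (f : Equiv.Perm α) : ℕ :=
  Nat.card (Quotient (orbitSetoid f))

/-- The homology `H_*(C̃(G))` of the fully blocked complex:
`ker ∂̃ / im ∂̃`. -/
noncomputable abbrev tildeHomology (n : ℕ) [NeZero n] (σO σX : Equiv.Perm (ZMod n)) :=
  LinearMap.ker (tildeDiff σO σX) ⧸
    (Submodule.comap (LinearMap.ker (tildeDiff σO σX)).subtype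
      (LinearMap.range (tildeDiff σO σX)) :
      Submodule (ZMod 2) (LinearMap.ker (tildeDiff σO σX)))

/-!
Weight every rectangle by the product of the weights of its squares. In characteristic 2 the
composites of two empty rectangles cancel in pairs (two disjoint or overlapping rectangles taken in
either order, or the two ways of cutting an L-shape), except for the annuli of width one. So the
weighted differential squares to the sum of the weights of all columns and all rows.

Give the square of the `X`-marking (resp. `O`-marking) in column `i` the weight `x i * t` (resp.
`o i * t`), where `t` is an indeterminate, and expand in powers of `t`. The constant coefficient is
`∂̃`. The linear coefficient `f (x, o)` is linear in `(x, o)` and anticommutes with `∂̃`, and its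
square is, up to a null-homotopy by the quadratic coefficient, multiplication by
`B x o = ∑ i, (x i + x (π i)) * o i` with `π = σX⁻¹ * σO`. The homology is therefore a Clifford
module for a quadratic form in which two isotropic subspaces are paired with rank `n - ℓ`. Dual
bases of these subspaces give `n - ℓ` commuting operators of square zero, each exact on the joint
kernel of the previous ones and hence halving its dimension.
-/

section CircularOrder

variable {α : Type*} [CircularOrder α] {a b c : α}

theorem ne_of_sbtw (h : sbtw a b c) : a ≠ b ∧ b ≠ c ∧ a ≠ c := by
  refine ⟨?_, ?_, ?_⟩ <;> rintro rfl
  · exact sbtw_irrefl_left h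
  · exact sbtw_irrefl_right h
  · exact sbtw_irrefl_left_right h

theorem sbtw_or_sbtw_of_ne (hab : a ≠ b) (hbc : b ≠ c) (hac : a ≠ c) :
    sbtw a b c ∨ sbtw c b a := by
  rw [sbtw_iff_not_btw, sbtw_iff_not_btw]
  have := @btw_antisymm _ _ a b c
  tauto

theorem sbtw_iff_of_sbtw (h : sbtw a b c) (i : α) :
    sbtw a i c ↔ sbtw a i b ∨ i = b ∨ sbtw b i c := by
  refine ⟨fun hi => ?_, ?_⟩
  · obtain ⟨hab, hbc, -⟩ := ne_of_sbtw h
    obtain ⟨hai, hic, -⟩ := ne_of_sbtw hi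
    by_contra! ⟨hi₁, hib, hi₂⟩
    have hiba : sbtw i b a := sbtw_trans_right
      ((sbtw_or_sbtw_of_ne hib.symm hic hbc).resolve_left hi₂).cyclic_left hi.cyclic_left
    exact hi₁ ((sbtw_or_sbtw_of_ne hai hib hab).resolve_right
      fun h' => hiba.not_sbtw h'.cyclic_right)
  · rintro (hi | rfl | hi)
    · exact sbtw_trans_right hi h
    · exact h
    · exact h.trans_left hi

theorem sbtw_and_sbtw_of_not_sbtw {d : α} (h : sbtw a b c) (hd : ¬ sbtw a d c) (hda : d ≠ a)
    (hdc : d ≠ c) : sbtw b c d ∧ sbtw d a b := by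
  obtain ⟨-, -, hac⟩ := ne_of_sbtw h
  have hcda := (sbtw_or_sbtw_of_ne hda.symm hdc hac).resolve_left hd
  exact ⟨(sbtw_trans_right hcda h.cyclic_right).cyclic_right,
    (h.cyclic_left.trans_left hcda).cyclic_left⟩

end CircularOrder

section EmptyRectangles

open Equiv

variable {α : Type*} [CircularOrder α]

/-- Emptiness of the rectangle that a permutation `x` of a circularly ordered set spans over the
arc from `a` to `b`: no point of the graph of `x` is in its interior. -/
def IsEmptyBetween (x : Perm α) (a b : α) : Prop :=
  ∀ i, sbtw a i b → ¬ sbtw (x a) (x i) (x b)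

theorem isEmptyBetween_inv_iff {x : Perm α} {a b : α} :
    IsEmptyBetween x⁻¹ (x a) (x b) ↔ IsEmptyBetween x a b := by
  rw [IsEmptyBetween, x.surjective.forall]
  exact forall_congr' fun i => by simpa using imp_not_comm

variable [DecidableEq α] {x : Perm α} {a b e : α}

theorem IsEmptyBetween.recut_lowerRight (h : sbtw a b e) (h₁ : IsEmptyBetween x a b)
    (h₂ : IsEmptyBetween (x * swap a b) a e) :
    sbtw (x a) (x b) (x e) ∧ IsEmptyBetween x b e ∧ IsEmptyBetween (x * swap b e) a b := by
  obtain ⟨hab, hbe, hae⟩ := ne_of_sbtw h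
  have hx : sbtw (x a) (x b) (x e) := by
    have hb : ¬ sbtw (x b) (x a) (x e) := by
      simpa [swap_apply_of_ne_of_ne hae.symm hbe.symm] using h₂ b h
    exact ((sbtw_or_sbtw_of_ne (by simpa using hab.symm) (by simpa using hae)
      (by simpa using hbe)).resolve_left hb).cyclic_left
  refine ⟨hx, fun i hi => ?_, fun i hi => ?_⟩
  · grind [Perm.mul_apply, h₂ i (h.trans_left hi), ne_of_sbtw hi, ne_of_sbtw (h.trans_left hi)]
  · have hxi : x i ≠ x b := by simpa using (ne_of_sbtw hi).2.1
    have hie := sbtw_trans_right hi h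
    grind [Perm.mul_apply, h₁ i hi, h₂ i hie, ne_of_sbtw hi, ne_of_sbtw hie,
      sbtw_iff_of_sbtw hx (x i)]

theorem IsEmptyBetween.recut_upperRight (h : sbtw a e b) (h₁ : IsEmptyBetween x a b)
    (h₂ : IsEmptyBetween (x * swap a b) a e) :
    sbtw (x a) (x b) (x e) ∧ IsEmptyBetween x a e ∧ IsEmptyBetween (x * swap a e) e b := by
  obtain ⟨hae, heb, hab⟩ := ne_of_sbtw h
  have hx : sbtw (x a) (x b) (x e) :=
    ((sbtw_or_sbtw_of_ne (by simpa using hae) (by simpa using heb)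
      (by simpa using hab)).resolve_left (h₁ e h)).cyclic_right
  refine ⟨hx, fun i hi => ?_, fun i hi => ?_⟩
  · have hib := sbtw_trans_right hi h
    have hxi : x i ≠ x b := by simpa using (ne_of_sbtw hib).2.1
    grind [Perm.mul_apply, h₁ i hib, h₂ i hi, ne_of_sbtw hi, ne_of_sbtw hib,
      sbtw_iff_of_sbtw hx (x i)]
  · have hib := h.trans_left hi
    grind [Perm.mul_apply, h₁ i hib, ne_of_sbtw hi, ne_of_sbtw hib]

theorem IsEmptyBetween.recut_upperLeft (h : sbtw e a b) (h₁ : IsEmptyBetween x a b)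
    (h₂ : IsEmptyBetween (x * swap a b) e b) :
    sbtw (x e) (x a) (x b) ∧ IsEmptyBetween x e a ∧ IsEmptyBetween (x * swap e a) a b := by
  rw [swap_comm] at h₂ ⊢
  exact recut_lowerRight (α := αᵒᵈ) h h₁ h₂

theorem isEmptyBetween_mul_swap_iff {c d p q : α} (hc : (x * swap a b) c = p)
    (hd : (x * swap a b) d = q) :
    IsEmptyBetween (x * swap a b) c d ↔ IsEmptyBetween (x⁻¹ * swap (x a) (x b)) p q := by
  rw [← isEmptyBetween_inv_iff, hc, hd, mul_swap_eq_swap_mul, mul_inv_rev, swap_inv]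

theorem isEmptyBetween_lowerRight_iff :
    sbtw a b e ∧ IsEmptyBetween x a b ∧ IsEmptyBetween (x * swap a b) a e ↔
      sbtw (x a) (x b) (x e) ∧ IsEmptyBetween x b e ∧ IsEmptyBetween (x * swap b e) a b := by
  refine ⟨fun ⟨h, h₁, h₂⟩ => h₁.recut_lowerRight h h₂, fun ⟨h, h₁, h₂⟩ => ?_⟩
  obtain ⟨hab, hbe, hae⟩ : a ≠ b ∧ b ≠ e ∧ a ≠ e := by simpa using ne_of_sbtw h
  have := (isEmptyBetween_inv_iff.2 h₁).recut_upperLeft h <|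
    (isEmptyBetween_mul_swap_iff (by simp [swap_apply_of_ne_of_ne, *]) (by simp)).1 h₂
  rw [isEmptyBetween_inv_iff, ← isEmptyBetween_mul_swap_iff (c := a) (d := e) (by simp)
    (by simp [swap_apply_of_ne_of_ne, Ne.symm, *])] at this
  simpa using this

theorem isEmptyBetween_upperRight_iff :
    sbtw a e b ∧ IsEmptyBetween x a b ∧ IsEmptyBetween (x * swap a b) a e ↔
      sbtw (x a) (x b) (x e) ∧ IsEmptyBetween x a e ∧ IsEmptyBetween (x * swap a e) e b := by
  refine ⟨fun ⟨h, h₁, h₂⟩ => h₁.recut_upperRight h h₂, fun ⟨h, h₁, h₂⟩ => ?_⟩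
  obtain ⟨hab, hbe, hae⟩ : a ≠ b ∧ b ≠ e ∧ a ≠ e := by simpa using ne_of_sbtw h
  have := (isEmptyBetween_inv_iff.2 h₁).recut_upperRight h <|
    (isEmptyBetween_mul_swap_iff (by simp) (by simp [swap_apply_of_ne_of_ne, Ne.symm, *])).1 h₂
  rw [isEmptyBetween_inv_iff, ← isEmptyBetween_mul_swap_iff (c := a) (d := e) (by simp)
    (by simp [swap_apply_of_ne_of_ne, Ne.symm, *])] at this
  simpa using this

theorem isEmptyBetween_upperLeft_iff :
    sbtw e a b ∧ IsEmptyBetween x a b ∧ IsEmptyBetween (x * swap a b) e b ↔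
      sbtw (x e) (x a) (x b) ∧ IsEmptyBetween x e a ∧ IsEmptyBetween (x * swap e a) a b := by
  rw [swap_comm a b, swap_comm e a]
  exact isEmptyBetween_lowerRight_iff (α := αᵒᵈ)

theorem isEmptyBetween_lowerLeft_iff :
    sbtw a e b ∧ IsEmptyBetween x a b ∧ IsEmptyBetween (x * swap a b) e b ↔
      sbtw (x e) (x a) (x b) ∧ IsEmptyBetween x e b ∧ IsEmptyBetween (x * swap e b) a e := by
  rw [swap_comm a b, swap_comm e b]
  exact isEmptyBetween_upperRight_iff (α := αᵒᵈ)

theorem IsEmptyBetween.swap_order {c d : α} (hac : a ≠ c) (had : a ≠ d) (hbc : b ≠ c) (hbd : b ≠ d)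
    (h₁ : IsEmptyBetween x a b) (h₂ : IsEmptyBetween (x * swap a b) c d) :
    IsEmptyBetween x c d ∧ IsEmptyBetween (x * swap c d) a b := by
  have ha : sbtw c a d → ¬ sbtw (x c) (x b) (x d) := by
    simpa [swap_apply_of_ne_of_ne, Ne.symm, *] using h₂ a
  have hb : sbtw c b d → ¬ sbtw (x c) (x a) (x d) := by
    simpa [swap_apply_of_ne_of_ne, Ne.symm, *] using h₂ b
  refine ⟨fun i hi hxi => ?_, fun i hi hxi => ?_⟩
  · rcases eq_or_ne i a with rfl | hia
    · exact h₁ d (sbtw_and_sbtw_of_not_sbtw hi (hb · hxi) hbc hbd).1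
        (sbtw_and_sbtw_of_not_sbtw hxi (ha hi) (by simpa) (by simpa)).1
    rcases eq_or_ne i b with rfl | hib
    · exact h₁ c (sbtw_and_sbtw_of_not_sbtw hi (ha · hxi) hac had).2
        (sbtw_and_sbtw_of_not_sbtw hxi (hb hi) (by simpa) (by simpa)).2
    · exact h₂ i hi (by simp [swap_apply_of_ne_of_ne, Ne.symm, *])
  · rw [Perm.mul_apply, Perm.mul_apply, Perm.mul_apply, swap_apply_of_ne_of_ne hac had,
      swap_apply_of_ne_of_ne hbc hbd] at hxi
    rcases eq_or_ne i c with rfl | hic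
    · rw [swap_apply_left] at hxi
      exact hb (sbtw_and_sbtw_of_not_sbtw hi (h₁ d · hxi) had.symm hbd.symm).1
        (sbtw_and_sbtw_of_not_sbtw hxi (h₁ i hi) (by simp [hac.symm]) (by simp [hbc.symm])).2
    rcases eq_or_ne i d with rfl | hid
    · rw [swap_apply_right] at hxi
      exact ha (sbtw_and_sbtw_of_not_sbtw hi (h₁ c · hxi) hac.symm hbc.symm).2
        (sbtw_and_sbtw_of_not_sbtw hxi (h₁ i hi) (by simp [had.symm]) (by simp [hbd.symm])).1
    · exact h₁ i hi (by simpa [swap_apply_of_ne_of_ne, Ne.symm, *] using hxi)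

end EmptyRectangles

section Arcs

theorem sbtw_iff_val_sub_lt {a b c : Fin n} :
    sbtw a b c ↔ 0 < (b - a).val ∧ (b - a).val < (c - a).val := by
  have hb := Fin.intCast_val_sub_eq_sub_add_ite b a
  have hc := Fin.intCast_val_sub_eq_sub_add_ite c a
  simp only [Fin.sbtw_iff, Fin.lt_def, Fin.le_def] at *
  split_ifs at hb hc <;> omega

variable [NeZero n] {a b c : ZMod n}

theorem cycIoo_iff_sbtw : cycIoo a b c ↔ sbtw a c b := by
  obtain _ | n := n
  · exact absurd rfl (NeZero.ne 0)
  · exact sbtw_iff_val_sub_lt.symm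

theorem cycIco_iff : cycIco a b c ↔ c = a ∧ a ≠ b ∨ sbtw a c b := by
  rw [← cycIoo_iff_sbtw, cycIco, cycIoo]
  rcases eq_or_ne c a with rfl | hca
  · simp [Nat.pos_iff_ne_zero, sub_eq_zero, eq_comm (a := b)]
  · simp [Nat.pos_iff_ne_zero, sub_eq_zero, hca]

theorem forall_not_sbtw_iff [Fact (1 < n)] (hab : a ≠ b) : (∀ i, ¬ sbtw a i b) ↔ b = a + 1 := by
  simp_rw [← cycIoo_iff_sbtw, cycIoo]
  refine ⟨fun h => ?_, ?_⟩
  · have hba : (b - a).val ≠ 0 := by simpa [sub_eq_zero] using hab.symm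
    have hb := h (a + 1)
    rw [add_sub_cancel_left, ZMod.val_one] at hb
    rw [← sub_eq_iff_eq_add', ← ZMod.val_injective n |>.eq_iff, ZMod.val_one]
    omega
  · rintro rfl i
    rw [add_sub_cancel_left, ZMod.val_one]
    omega

/-- The cyclic half-open interval `[a, b)` as a finset. -/
noncomputable def arc (a b : ZMod n) : Finset (ZMod n) := {i | cycIco a b i}

theorem mem_arc {i : ZMod n} : i ∈ arc a b ↔ cycIco a b i := by simp [arc]

theorem arc_succ [Fact (1 < n)] : arc a (a + 1) = {a} := by
  ext i
  simp [mem_arc, cycIco, ZMod.val_one, sub_eq_zero]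

theorem disjoint_arc (h : sbtw a b c) : Disjoint (arc a b) (arc b c) := by
  rw [Finset.disjoint_left]
  intro i hi hi'
  rw [mem_arc, cycIco_iff] at hi hi'
  grind [ne_of_sbtw, sbtw_cyclic_left, sbtw_asymm, sbtw_trans_right]

theorem arc_union_arc (h : sbtw a b c) : arc a b ∪ arc b c = arc a c := by
  ext i
  have := ne_of_sbtw h
  simp only [Finset.mem_union, mem_arc, cycIco_iff, sbtw_iff_of_sbtw h i]
  tauto

theorem prod_arc_mul_prod_arc {M : Type*} [CommMonoid M] (h : sbtw a b c) (f : ZMod n → M) :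
    (∏ i ∈ arc a b, f i) * ∏ i ∈ arc b c, f i = ∏ i ∈ arc a c, f i := by
  rw [← arc_union_arc h, Finset.prod_union (disjoint_arc h)]

theorem compl_arc (h : a ≠ b) : (arc a b)ᶜ = arc b a := by
  ext i
  simp only [Finset.mem_compl, mem_arc, cycIco_iff]
  have := @sbtw_or_sbtw_of_ne _ _ a i b
  have := @sbtw_asymm _ _ a i b
  grind [ne_of_sbtw]

theorem prod_arc_mul_prod_arc_swap {M : Type*} [CommMonoid M] (h : a ≠ b) (f : ZMod n → M) :
    (∏ i ∈ arc a b, f i) * ∏ i ∈ arc b a, f i = ∏ i, f i := by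
  rw [← compl_arc h, Finset.prod_mul_prod_compl]

end Arcs

section Recut

open Equiv

variable {x z : Perm (ZMod n)} {a b c d e : ZMod n} {q q' : (ZMod n × ZMod n) × ZMod n × ZMod n}

/-- The rectangle spanned by `q.1` at `x`, followed by the one spanned by `q.2`, is a composite of
two empty rectangles from `x` to `z`. -/
def IsComposite (x z : Perm (ZMod n)) (q : (ZMod n × ZMod n) × ZMod n × ZMod n) : Prop :=
  IsEmptyRect x (x * swap q.1.1 q.1.2) q.1.1 q.1.2 ∧
    IsEmptyRect (x * swap q.1.1 q.1.2) z q.2.1 q.2.2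

/-- `q` and `q'` are the two ways of cutting a common domain starting at `x` into two rectangles:
either the domain is L-shaped, and `IsRecut` names the reflex corner, or the two rectangles have no
common corner and `q'` lists them in the other order. -/
inductive IsRecut (x : Perm (ZMod n)) :
    (ZMod n × ZMod n) × ZMod n × ZMod n → (ZMod n × ZMod n) × ZMod n × ZMod n → Prop
  | lowerRight {a b e : ZMod n} (h : sbtw a b e) (hx : sbtw (x a) (x b) (x e)) :
      IsRecut x ((a, b), (a, e)) ((b, e), (a, b))
  | upperRight {a b e : ZMod n} (h : sbtw a e b) (hx : sbtw (x a) (x b) (x e)) :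
      IsRecut x ((a, b), (a, e)) ((a, e), (e, b))
  | upperLeft {a b e : ZMod n} (h : sbtw e a b) (hx : sbtw (x e) (x a) (x b)) :
      IsRecut x ((a, b), (e, b)) ((e, a), (a, b))
  | lowerLeft {a b e : ZMod n} (h : sbtw a e b) (hx : sbtw (x e) (x a) (x b)) :
      IsRecut x ((a, b), (e, b)) ((e, b), (a, e))
  | disjoint {a b c d : ZMod n} (hac : a ≠ c) (had : a ≠ d) (hbc : b ≠ c) (hbd : b ≠ d) :
      IsRecut x ((a, b), (c, d)) ((c, d), (a, b))

/-- The other way of cutting the domain of a composite of two empty rectangles starting at `x`,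
unless that domain is an annulus. -/
noncomputable def recut (x : Perm (ZMod n)) :
    (ZMod n × ZMod n) × ZMod n × ZMod n → (ZMod n × ZMod n) × ZMod n × ZMod n
  | ((a, b), (c, d)) =>
    if c = a then if sbtw a b d then ((b, d), (a, b)) else ((a, d), (d, b))
    else if d = b then if sbtw c a b then ((c, a), (a, b)) else ((c, b), (a, c))
    else if d = a then if sbtw (x c) (x a) (x b) then ((c, a), (c, b)) else ((c, b), (a, b))
    else if c = b then if sbtw (x a) (x d) (x b) then ((a, d), (a, b)) else ((b, d), (a, d))
    else ((c, d), (a, b))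

theorem IsRecut.ne (h : IsRecut x q q') : q ≠ q' := by
  cases h <;> grind [ne_of_sbtw]

theorem IsRecut.recut_left (h : IsRecut x q q') : recut x q = q' := by
  cases h <;> grind [recut, ne_of_sbtw, sbtw_asymm, sbtw_cyclic_left]

theorem IsRecut.recut_right (h : IsRecut x q q') : recut x q' = q := by
  cases h <;> grind [recut, ne_of_sbtw, sbtw_asymm, sbtw_cyclic_left]

variable [NeZero n]

theorem isEmptyRect_iff {x y : Perm (ZMod n)} {a b : ZMod n} :
    IsEmptyRect x y a b ↔ a ≠ b ∧ y = x * swap a b ∧ IsEmptyBetween x a b := by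
  simp [IsEmptyRect, IsRect, rectInterior, IsEmptyBetween, cycIoo_iff_sbtw, and_assoc]

theorem isComposite_lowerRight_iff :
    sbtw a b e ∧ IsComposite x z ((a, b), (a, e)) ↔
      sbtw (x a) (x b) (x e) ∧ IsComposite x z ((b, e), (a, b)) := by
  have key := isEmptyBetween_lowerRight_iff (x := x) (a := a) (b := b) (e := e)
  have hswap (_ : a ≠ b) (_ : b ≠ e) (_ : a ≠ e) :
      x * swap a b * swap a e = x * swap b e * swap a b := by
    ext i
    grind [Perm.mul_apply]
  simp only [IsComposite, isEmptyRect_iff]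
  grind [x.injective, @ne_of_sbtw _ _ a b e, @ne_of_sbtw _ _ (x a) (x b) (x e)]

theorem isComposite_upperRight_iff :
    sbtw a e b ∧ IsComposite x z ((a, b), (a, e)) ↔
      sbtw (x a) (x b) (x e) ∧ IsComposite x z ((a, e), (e, b)) := by
  have key := isEmptyBetween_upperRight_iff (x := x) (a := a) (b := b) (e := e)
  have hswap (_ : a ≠ b) (_ : b ≠ e) (_ : a ≠ e) :
      x * swap a b * swap a e = x * swap a e * swap e b := by
    ext i
    grind [Perm.mul_apply]
  simp only [IsComposite, isEmptyRect_iff]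
  grind [x.injective, @ne_of_sbtw _ _ a e b, @ne_of_sbtw _ _ (x a) (x b) (x e)]

theorem isComposite_upperLeft_iff :
    sbtw e a b ∧ IsComposite x z ((a, b), (e, b)) ↔
      sbtw (x e) (x a) (x b) ∧ IsComposite x z ((e, a), (a, b)) := by
  have key := isEmptyBetween_upperLeft_iff (x := x) (a := a) (b := b) (e := e)
  have hswap (_ : a ≠ b) (_ : b ≠ e) (_ : a ≠ e) :
      x * swap a b * swap e b = x * swap e a * swap a b := by
    ext i
    grind [Perm.mul_apply]
  simp only [IsComposite, isEmptyRect_iff]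
  grind [x.injective, @ne_of_sbtw _ _ e a b, @ne_of_sbtw _ _ (x e) (x a) (x b)]

theorem isComposite_lowerLeft_iff :
    sbtw a e b ∧ IsComposite x z ((a, b), (e, b)) ↔
      sbtw (x e) (x a) (x b) ∧ IsComposite x z ((e, b), (a, e)) := by
  have key := isEmptyBetween_lowerLeft_iff (x := x) (a := a) (b := b) (e := e)
  have hswap (_ : a ≠ b) (_ : b ≠ e) (_ : a ≠ e) :
      x * swap a b * swap e b = x * swap e b * swap a e := by
    ext i
    grind [Perm.mul_apply]
  simp only [IsComposite, isEmptyRect_iff]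
  grind [x.injective, @ne_of_sbtw _ _ a e b, @ne_of_sbtw _ _ (x e) (x a) (x b)]

theorem IsComposite.swap_order (hac : a ≠ c) (had : a ≠ d) (hbc : b ≠ c) (hbd : b ≠ d)
    (h : IsComposite x z ((a, b), (c, d))) : IsComposite x z ((c, d), (a, b)) := by
  simp only [IsComposite, isEmptyRect_iff] at h ⊢
  obtain ⟨⟨hab, -, h₁⟩, hcd, rfl, h₂⟩ := h
  obtain ⟨h₁', h₂'⟩ := h₁.swap_order hac had hbc hbd h₂
  refine ⟨⟨hcd, trivial, h₁'⟩, hab, ?_, h₂'⟩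
  ext i
  grind [Perm.mul_apply]

theorem IsRecut.isComposite_iff (h : IsRecut x q q') : IsComposite x z q ↔ IsComposite x z q' := by
  cases h with
  | lowerRight h hx =>
    exact (and_iff_right h).symm.trans (isComposite_lowerRight_iff.trans (and_iff_right hx))
  | upperRight h hx =>
    exact (and_iff_right h).symm.trans (isComposite_upperRight_iff.trans (and_iff_right hx))
  | upperLeft h hx =>
    exact (and_iff_right h).symm.trans (isComposite_upperLeft_iff.trans (and_iff_right hx))
  | lowerLeft h hx =>
    exact (and_iff_right h).symm.trans (isComposite_lowerLeft_iff.trans (and_iff_right hx))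
  | disjoint hac had hbc hbd =>
    exact ⟨.swap_order hac had hbc hbd, .swap_order hac.symm hbc.symm had.symm hbd.symm⟩

theorem IsComposite.exists_isRecut (h : IsComposite x z q) (hzx : z ≠ x) :
    ∃ q', IsRecut x q q' ∨ IsRecut x q' q := by
  obtain ⟨⟨a, b⟩, c, d⟩ := q
  have h' := h
  simp only [IsComposite, isEmptyRect_iff] at h'
  obtain ⟨⟨hab, -, -⟩, hcd, rfl, -⟩ := h'
  rcases eq_or_ne c a with rfl | hca
  · have hbd : b ≠ d := by
      rintro rfl
      simp [mul_assoc] at hzx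
    rcases sbtw_or_sbtw_of_ne hab hbd hcd with hs | hs
    · exact ⟨_, .inl (.lowerRight hs (isComposite_lowerRight_iff.1 ⟨hs, h⟩).1)⟩
    · have hs := hs.cyclic_right
      exact ⟨_, .inl (.upperRight hs (isComposite_upperRight_iff.1 ⟨hs, h⟩).1)⟩
  rcases eq_or_ne d b with rfl | hdb
  · rcases sbtw_or_sbtw_of_ne hca hab hcd with hs | hs
    · exact ⟨_, .inl (.upperLeft hs (isComposite_upperLeft_iff.1 ⟨hs, h⟩).1)⟩
    · have hs := hs.cyclic_left
      exact ⟨_, .inl (.lowerLeft hs (isComposite_lowerLeft_iff.1 ⟨hs, h⟩).1)⟩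
  have hx {i j} : i ≠ j → x i ≠ x j := x.injective.ne
  rcases eq_or_ne d a with rfl | hda
  · have hcb : c ≠ b := by
      rintro rfl
      simp [mul_assoc, swap_comm c] at hzx
    rcases sbtw_or_sbtw_of_ne (hx hca) (hx hab) (hx hcb) with hs | hs
    · exact ⟨_, .inr (.lowerRight (isComposite_lowerRight_iff.2 ⟨hs, h⟩).1 hs)⟩
    · have hs := hs.cyclic_left
      exact ⟨_, .inr (.lowerLeft (isComposite_lowerLeft_iff.2 ⟨hs, h⟩).1 hs)⟩
  rcases eq_or_ne c b with rfl | hcb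
  · rcases sbtw_or_sbtw_of_ne (hx hab) (hx hcd) (hx hda.symm) with hs | hs
    · exact ⟨_, .inr (.upperLeft (isComposite_upperLeft_iff.2 ⟨hs, h⟩).1 hs)⟩
    · have hs := hs.cyclic_right
      exact ⟨_, .inr (.upperRight (isComposite_upperRight_iff.2 ⟨hs, h⟩).1 hs)⟩
  · exact ⟨_, .inl (.disjoint hca.symm hda.symm hcb.symm hdb.symm)⟩

theorem IsComposite.isRecut_recut (h : IsComposite x z q) (hzx : z ≠ x) :
    IsRecut x q (recut x q) ∨ IsRecut x (recut x q) q := by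
  obtain ⟨q', hq | hq⟩ := h.exists_isRecut hzx
  · exact .inl (hq.recut_left ▸ hq)
  · exact .inr (hq.recut_right ▸ hq)

end Recut

section Weights

open Equiv

variable [NeZero n] {R : Type*} [CommRing R] (w : ZMod n × ZMod n → R)

/-- The weight of the rectangle with columns `[a, b)` and rows `[p, q)`: the product of the weights
of its squares. -/
noncomputable def boxWeight (a b p q : ZMod n) : R := ∏ s ∈ arc a b ×ˢ arc p q, w s

variable {w} {x z : Perm (ZMod n)} {a b c p q r : ZMod n}

theorem boxWeight_mul_boxWeight_col (h : sbtw a b c) :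
    boxWeight w a b p q * boxWeight w b c p q = boxWeight w a c p q := by
  simp_rw [boxWeight, Finset.prod_product]
  exact prod_arc_mul_prod_arc h _

theorem boxWeight_mul_boxWeight_row (h : sbtw p q r) :
    boxWeight w a b p q * boxWeight w a b q r = boxWeight w a b p r := by
  simp_rw [boxWeight, Finset.prod_product_right]
  exact prod_arc_mul_prod_arc h _

variable (w) in
/-- The weight of the composite of the rectangle that `q.1` spans at `x` and the one that `q.2`
spans afterwards. -/
noncomputable def compositeWeight (x : Perm (ZMod n)) (q : (ZMod n × ZMod n) × ZMod n × ZMod n) :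
    R :=
  boxWeight w q.1.1 q.1.2 (x q.1.1) (x q.1.2) *
    boxWeight w q.2.1 q.2.2 ((x * swap q.1.1 q.1.2) q.2.1) ((x * swap q.1.1 q.1.2) q.2.2)

theorem IsRecut.compositeWeight_eq {q q' : (ZMod n × ZMod n) × ZMod n × ZMod n}
    (h : IsRecut x q q') : compositeWeight w x q = compositeWeight w x q' := by
  cases h with
  | @lowerRight a b e h hx =>
    obtain ⟨hab, hbe, hae⟩ := ne_of_sbtw h
    simp only [compositeWeight, Perm.mul_apply, swap_apply_left,
      swap_apply_of_ne_of_ne hae.symm hbe.symm, swap_apply_of_ne_of_ne hab hae]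
    rw [← boxWeight_mul_boxWeight_col h, ← boxWeight_mul_boxWeight_row hx]
    ring
  | @upperRight a b e h hx =>
    obtain ⟨hae, heb, hab⟩ := ne_of_sbtw h
    simp only [compositeWeight, Perm.mul_apply, swap_apply_left, swap_apply_right,
      swap_apply_of_ne_of_ne hae.symm heb, swap_apply_of_ne_of_ne hab.symm heb.symm]
    rw [← boxWeight_mul_boxWeight_col h, ← boxWeight_mul_boxWeight_row hx]
    ring
  | @upperLeft a b e h hx =>
    obtain ⟨hea, hab, heb⟩ := ne_of_sbtw h
    simp only [compositeWeight, Perm.mul_apply, swap_apply_right,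
      swap_apply_of_ne_of_ne hea heb, swap_apply_of_ne_of_ne heb.symm hab.symm]
    rw [← boxWeight_mul_boxWeight_col h, ← boxWeight_mul_boxWeight_row hx]
    ring
  | @lowerLeft a b e h hx =>
    obtain ⟨hae, heb, hab⟩ := ne_of_sbtw h
    simp only [compositeWeight, Perm.mul_apply, swap_apply_left, swap_apply_right,
      swap_apply_of_ne_of_ne hae.symm heb, swap_apply_of_ne_of_ne hae hab]
    rw [← boxWeight_mul_boxWeight_col h, ← boxWeight_mul_boxWeight_row hx]
    ring
  | disjoint hac had hbc hbd =>
    simp [compositeWeight, swap_apply_of_ne_of_ne, Ne.symm, *, mul_comm]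

variable (w) in
/-- The matrix of the grid differential in which every empty rectangle counts with the product of
the weights of its squares; columns are indexed by the source generator. -/
noncomputable def gridMatrix : Matrix (Perm (ZMod n)) (Perm (ZMod n)) R :=
  fun y x => ∑ q : ZMod n × ZMod n,
    if IsEmptyRect x y q.1 q.2 then boxWeight w q.1 q.2 (x q.1) (x q.2) else 0

theorem gridMatrix_mul_self_apply :
    (gridMatrix w * gridMatrix w) z x = ∑ q with IsComposite x z q, compositeWeight w x q := by
  have hcomp (q : (ZMod n × ZMod n) × ZMod n × ZMod n) :
      (if IsComposite x z q then compositeWeight w x q else 0) = ∑ y,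
        (if IsEmptyRect y z q.2.1 q.2.2 then boxWeight w q.2.1 q.2.2 (y q.2.1) (y q.2.2) else 0) *
          if IsEmptyRect x y q.1.1 q.1.2 then boxWeight w q.1.1 q.1.2 (x q.1.1) (x q.1.2)
          else 0 := by
    rw [Finset.sum_eq_single (x * swap q.1.1 q.1.2)]
    · simp only [IsComposite, compositeWeight]
      split_ifs <;> grind
    · intro y _ hy
      rw [if_neg fun h : IsEmptyRect x y _ _ => hy (isEmptyRect_iff.1 h).2.1, mul_zero]
    · simp
  simp_rw [Finset.sum_filter, hcomp, Matrix.mul_apply, gridMatrix, Finset.sum_mul_sum]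
  rw [Finset.sum_comm (s := Finset.univ (α := (ZMod n × ZMod n) × ZMod n × ZMod n))]
  refine Finset.sum_congr rfl fun y _ => ?_
  rw [Fintype.sum_prod_type_right (α₁ := ZMod n × ZMod n)]

theorem gridMatrix_mul_self_apply_of_ne [CharP R 2] (h : z ≠ x) :
    (gridMatrix w * gridMatrix w) z x = 0 := by
  rw [gridMatrix_mul_self_apply]
  refine Finset.sum_involution (fun q _ => recut x q) ?_ ?_ ?_ ?_ <;> intro q hq <;>
    rw [Finset.mem_filter_univ] at hq <;> rcases hq.isRecut_recut h with hr | hr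
  · rw [hr.compositeWeight_eq, CharTwo.add_self_eq_zero]
  · rw [hr.compositeWeight_eq, CharTwo.add_self_eq_zero]
  · exact fun _ => hr.ne.symm
  · exact fun _ => hr.ne
  · simpa using hr.isComposite_iff.1 hq
  · simpa using hr.isComposite_iff.2 hq
  · exact hr.recut_right
  · exact hr.recut_left

theorem isComposite_columnAnnulus_iff [Fact (1 < n)] :
    IsComposite x x ((a, b), (a, b)) ↔ b = a + 1 := by
  rw [IsComposite, isEmptyRect_iff, isEmptyRect_iff]
  have key (hab : a ≠ b) :
      IsEmptyBetween x a b ∧ IsEmptyBetween (x * swap a b) a b ↔ ∀ i, ¬ sbtw a i b := by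
    refine ⟨fun ⟨h₁, h₂⟩ i hi => ?_,
      fun h => ⟨fun i hi => (h i hi).elim, fun i hi => (h i hi).elim⟩⟩
    obtain ⟨hai, hib, -⟩ := ne_of_sbtw hi
    have h₂ := h₂ i hi
    simp only [Perm.mul_apply, swap_apply_left, swap_apply_right,
      swap_apply_of_ne_of_ne hai.symm hib] at h₂
    have hx {i j} : i ≠ j → x i ≠ x j := x.injective.ne
    exact (sbtw_or_sbtw_of_ne (hx hai) (hx hib) (hx hab)).elim (h₁ i hi) h₂
  have hxx : x = x * swap a b * swap a b := by simp [mul_assoc]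
  have hne : b = a + 1 → a ≠ b := by rintro rfl; simp
  have := @forall_not_sbtw_iff n _ a b _
  grind

theorem isComposite_rowAnnulus_iff [Fact (1 < n)] :
    IsComposite x x ((a, b), (b, a)) ↔ x b = x a + 1 := by
  rw [IsComposite, isEmptyRect_iff, isEmptyRect_iff]
  have key (hab : a ≠ b) : IsEmptyBetween x a b ∧ IsEmptyBetween (x * swap a b) b a ↔
      ∀ i, ¬ sbtw (x a) i (x b) := by
    rw [x.surjective.forall]
    refine ⟨fun ⟨h₁, h₂⟩ i hi => ?_, fun h => ⟨fun i _ => h i, fun i hi => ?_⟩⟩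
    · obtain ⟨hai, hib, -⟩ : a ≠ i ∧ i ≠ b ∧ a ≠ b := by simpa using ne_of_sbtw hi
      rcases sbtw_or_sbtw_of_ne hai hib hab with hs | hs
      · exact h₁ i hs hi
      · exact h₂ i hs (by simpa [swap_apply_of_ne_of_ne hai.symm hib] using hi)
    · obtain ⟨hbi, hia, -⟩ := ne_of_sbtw hi
      simpa [swap_apply_of_ne_of_ne hia hbi.symm] using h i
  have hxx : x = x * swap a b * swap b a := by simp [mul_assoc, swap_comm b]
  have hne : x b = x a + 1 → a ≠ b := by rintro h rfl; simp at h
  have := @forall_not_sbtw_iff n _ (x a) (x b) _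
  grind [x.injective]

theorem compositeWeight_columnAnnulus [Fact (1 < n)] :
    compositeWeight w x ((a, a + 1), (a, a + 1)) = ∏ j, w (a, j) := by
  have : x a ≠ x (a + 1) := by simp
  simp_rw [compositeWeight, Perm.mul_apply, swap_apply_left, swap_apply_right, boxWeight,
    Finset.prod_product, arc_succ, Finset.prod_singleton]
  exact prod_arc_mul_prod_arc_swap this _

theorem compositeWeight_rowAnnulus [Fact (1 < n)] (h : x b = x a + 1) :
    compositeWeight w x ((a, b), (b, a)) = ∏ i, w (i, x a) := by
  have : a ≠ b := by rintro rfl; simp at h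
  simp_rw [compositeWeight, Perm.mul_apply, swap_apply_left, swap_apply_right, boxWeight, h,
    Finset.prod_product_right, arc_succ, Finset.prod_singleton]
  exact prod_arc_mul_prod_arc_swap this _

theorem filter_isComposite_self [Fact (1 < n)] :
    ({q | IsComposite x x q} : Finset _) =
      (Finset.univ.image fun a => ((a, a + 1), (a, a + 1))) ∪
        Finset.univ.image fun j => ((x⁻¹ j, x⁻¹ (j + 1)), (x⁻¹ (j + 1), x⁻¹ j)) := by
  ext ⟨⟨a, b⟩, c, d⟩
  have hann : IsComposite x x ((a, b), (c, d)) → c = a ∧ d = b ∨ c = b ∧ d = a := by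
    simp only [IsComposite, isEmptyRect_iff]
    rintro ⟨-, hcd, h, -⟩
    have h : swap c d = swap a b := by simpa [mul_assoc, mul_eq_one_iff_eq_inv'] using h
    have := swap_apply_left c d
    have := swap_apply_right c d
    grind
  rw [Finset.mem_filter_univ, Finset.mem_union, Finset.mem_image, Finset.mem_image]
  constructor
  · intro h
    rcases hann h with ⟨rfl, rfl⟩ | ⟨rfl, rfl⟩
    · exact .inl ⟨c, by simp [isComposite_columnAnnulus_iff.1 h]⟩
    · exact .inr ⟨x d, by simp [← isComposite_rowAnnulus_iff.1 h]⟩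
  · rintro (⟨i, -, hi⟩ | ⟨j, -, hj⟩)
    · exact hi ▸ isComposite_columnAnnulus_iff.2 rfl
    · exact hj ▸ isComposite_rowAnnulus_iff.2 (by simp)

theorem gridMatrix_mul_self_apply_self [Fact (1 < n)] :
    (gridMatrix w * gridMatrix w) x x = ∑ a, ∏ j, w (a, j) + ∑ j, ∏ i, w (i, j) := by
  rw [gridMatrix_mul_self_apply, filter_isComposite_self, Finset.sum_union,
    Finset.sum_image fun a _ b _ h => congrArg (·.1.1) h,
    Finset.sum_image fun i _ j _ h => x⁻¹.injective (congrArg (·.1.1) h)]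
  · simp_rw [compositeWeight_columnAnnulus]
    congr 1
    refine Finset.sum_congr rfl fun j _ => ?_
    rw [compositeWeight_rowAnnulus (by simp)]
    simp
  · rw [Finset.disjoint_left]
    simp only [Finset.mem_image]
    rintro _ ⟨a, -, rfl⟩ ⟨j, -, h⟩
    simp only [Prod.mk.injEq] at h
    exact (by simp : a ≠ a + 1) (h.1.1.symm.trans h.2.2)

theorem gridMatrix_mul_self [CharP R 2] :
    gridMatrix w * gridMatrix w = (∑ a, ∏ j, w (a, j) + ∑ j, ∏ i, w (i, j)) • 1 := by
  ext z x
  rw [Matrix.smul_apply, smul_eq_mul]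
  rcases eq_or_ne z x with rfl | hzx
  · rw [Matrix.one_apply_eq, mul_one]
    obtain rfl | hn : n = 1 ∨ 1 < n := by have := NeZero.pos n; omega
    · have hsum (f : ZMod 1 → R) : ∑ i, f i = f 0 := Fintype.sum_subsingleton f 0
      have hprod (f : ZMod 1 → R) : ∏ i, f i = f 0 := Fintype.prod_subsingleton f 0
      have : gridMatrix w = 0 := by
        ext y x
        exact Finset.sum_eq_zero fun q _ => if_neg fun h => h.1.1 (Subsingleton.elim _ _)
      simp_rw [this, hsum, hprod, CharTwo.add_self_eq_zero, mul_zero, Matrix.zero_apply]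
    · have := Fact.mk hn
      exact gridMatrix_mul_self_apply_self
  · rw [gridMatrix_mul_self_apply_of_ne hzx, Matrix.one_apply_ne hzx, mul_zero]

end Weights

section CliffordModules

open Module

section Ring

variable {k V : Type*} [CommRing k] [AddCommGroup V] [Module k V]

theorem range_eq_ker_of_mul_add_mul_eq_one {p q : End k V} (hp : p * p = 0)
    (hpq : p * q + q * p = 1) : p.range = p.ker := by
  ext v
  refine ⟨?_, fun hv => ⟨q v, ?_⟩⟩
  · rintro ⟨v, rfl⟩
    exact LinearMap.congr_fun hp v
  · simpa [LinearMap.mem_ker.1 hv] using LinearMap.congr_fun hpq v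

theorem mapsTo_ker_of_mul_add_mul_eq_zero {p f : End k V} (h : p * f + f * p = 0) (v : V)
    (hv : v ∈ p.ker) : f v ∈ p.ker := by
  simpa [LinearMap.mem_ker.1 hv] using LinearMap.congr_fun h v

theorem exists_linearIndependent_comp {A D : Type*} [AddCommGroup A] [Module k A]
    [AddCommGroup D] [Module k D] (g : A →ₗ[k] D) :
    ∃ a : Fin (finrank k g.range) → A, LinearIndependent k fun i => g (a i) := by
  obtain ⟨b, hb⟩ := exists_linearIndependent_of_le_finrank (le_refl (finrank k g.range))
  choose a ha using fun i => (b i).2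
  refine ⟨a, ?_⟩
  rw [show (fun i => g (a i)) = g.range.subtype ∘ b from funext ha]
  exact hb.map' g.range.subtype g.range.ker_subtype

end Ring

variable {k V : Type*} [Field k] [AddCommGroup V] [Module k V] [FiniteDimensional k V]

theorem two_pow_dvd_finrank_of_anticommuting {m : ℕ} {p q : Fin m → End k V}
    (hp : ∀ i, p i * p i = 0) (hpp : ∀ i j, p i * p j + p j * p i = 0)
    (hpq : ∀ i j, p i * q j + q j * p i = if i = j then 1 else 0) : 2 ^ m ∣ finrank k V := by
  induction m generalizing V with
  | zero => simp
  | succ m ih =>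
    have hp' (i : Fin m) := mapsTo_ker_of_mul_add_mul_eq_zero (hpp 0 i.succ)
    have hq' (i : Fin m) := mapsTo_ker_of_mul_add_mul_eq_zero
      ((hpq 0 i.succ).trans (if_neg i.succ_ne_zero.symm))
    have hker : 2 ^ m ∣ finrank k (p 0).ker := by
      refine ih (p := fun i => (p i.succ).restrict (hp' i))
        (q := fun i => (q i.succ).restrict (hq' i)) (fun i => ?_) (fun i j => ?_) fun i j => ?_
      · ext v
        simpa using LinearMap.congr_fun (hp i.succ) (v : V)
      · ext v
        simpa using LinearMap.congr_fun (hpp i.succ j.succ) (v : V)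
      · ext v
        have := LinearMap.congr_fun (hpq i.succ j.succ) (v : V)
        split_ifs with hij <;> simpa [hij] using this
    rw [← (p 0).finrank_range_add_finrank_ker,
      range_eq_ker_of_mul_add_mul_eq_one (hp 0) ((hpq 0 0).trans (if_pos rfl)), ← two_mul,
      pow_succ']
    exact mul_dvd_mul_left 2 hker

theorem exists_dual_family {B : Type*} [AddCommGroup B] [Module k B] [FiniteDimensional k B]
    {m : ℕ} {φ : Fin m → Dual k B} (hφ : LinearIndependent k φ) :
    ∃ b : Fin m → B, ∀ i j, φ i (b j) = if i = j then 1 else 0 := by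
  have (j : Fin m) : ∃ b : B, ∀ i, φ i b = if i = j then 1 else 0 := by
    obtain ⟨g, hg⟩ := LinearMap.exists_extend ((Basis.span hφ).coord j)
    refine ⟨(evalEquiv k B).symm g, fun i => ?_⟩
    have hgφ : g (φ i) = (Basis.span hφ).coord j (Basis.span hφ i) := by
      rw [← hg, LinearMap.comp_apply, Submodule.subtype_apply, Basis.span_apply]
    rw [apply_evalEquiv_symm_apply, hgφ, Basis.coord_apply, Basis.repr_self, Finsupp.single_apply]
  choose b hb using this
  exact ⟨b, fun i j => hb j i⟩

theorem two_pow_finrank_range_dvd_finrank {A B : Type*} [AddCommGroup A] [Module k A]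
    [AddCommGroup B] [Module k B] [FiniteDimensional k B] (β : A →ₗ[k] Dual k B)
    (f : A × B →ₗ[k] End k V) (hf : ∀ a b, f (a, b) * f (a, b) = algebraMap k _ (β a b)) :
    2 ^ finrank k β.range ∣ finrank k V := by
  have hpolar (a a' b b') : f (a, b) * f (a', b') + f (a', b') * f (a, b) =
      algebraMap k _ (β a b' + β a' b) := by
    have h := hf (a + a') (b + b')
    rw [← Prod.mk_add_mk, map_add f, add_mul, mul_add, mul_add, hf, hf] at h
    simp only [map_add, LinearMap.add_apply] at h ⊢
    grind
  obtain ⟨a, ha⟩ := exists_linearIndependent_comp β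
  obtain ⟨b, hb⟩ := exists_dual_family ha
  refine two_pow_dvd_finrank_of_anticommuting (p := fun i => f (a i, 0))
    (q := fun i => f (0, b i)) (fun i => ?_) (fun i j => ?_) fun i j => ?_
  · rw [hf, map_zero, map_zero]
  · rw [hpolar, map_zero, map_zero, add_zero, map_zero]
  · rw [hpolar, hb, map_zero, add_zero, apply_ite (algebraMap k _), map_one,
      map_zero]

end CliffordModules

section Homology

open Module

variable {k V : Type*} [CommRing k] [AddCommGroup V] [Module k V]

/-- The homology `ker d / im d` of an endomorphism `d`. It is meant for `d * d = 0`; in general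
`im d` is replaced by its intersection with `ker d`. -/
abbrev homology (d : End k V) := d.ker ⧸ d.range.comap d.ker.subtype

variable {d : End k V} {E : Type*} [AddCommGroup E] [Module k E] {f : E →ₗ[k] End k V}

/-- A linear family `f` of endomorphisms anticommuting with `d` acts on the homology of `d`. -/
def homologyMap (f : E →ₗ[k] End k V) (hf : ∀ v, d * f v + f v * d = 0) :
    E →ₗ[k] End k (homology d) where
  toFun v := Submodule.mapQ _ _ ((f v).restrict (mapsTo_ker_of_mul_add_mul_eq_zero (hf v))) <| by
    rintro ⟨_, _⟩ ⟨u, rfl⟩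
    exact ⟨-f v u, by
      simpa [neg_eq_iff_add_eq_zero] using LinearMap.congr_fun (hf v) u⟩
  map_add' v w := by
    ext u
    simp [LinearMap.restrict_apply, ← Submodule.Quotient.mk_add]
  map_smul' c v := by
    ext u
    simp [LinearMap.restrict_apply, ← Submodule.Quotient.mk_smul]

theorem homologyMap_mul_self {hf : ∀ v, d * f v + f v * d = 0} {v : E} {K : End k V} {c : k}
    (h : d * K + f v * f v + K * d = algebraMap k _ c) :
    homologyMap f hf v * homologyMap f hf v = algebraMap k _ c := by
  ext u
  have hu : d (K u) + f v (f v u) = c • (u : V) := by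
    simpa [LinearMap.mem_ker.1 u.2] using LinearMap.congr_fun h u
  refine (Submodule.Quotient.eq _).2 ⟨-K u, ?_⟩
  simp [LinearMap.restrict_apply, ← hu]

open Polynomial in
theorem two_pow_finrank_range_dvd_finrank_homology {k V A B : Type*} [Field k] [AddCommGroup V]
    [Module k V] [FiniteDimensional k V] [AddCommGroup A] [Module k A] [AddCommGroup B]
    [Module k B] [FiniteDimensional k B] (β : A →ₗ[k] Dual k B) {d : End k V}
    {f : A × B →ₗ[k] End k V} {P : A × B → (End k V)[X]} (hd : ∀ v, (P v).coeff 0 = d)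
    (hf : ∀ v, (P v).coeff 1 = f v)
    (hP : ∀ a b, P (a, b) * P (a, b) = C (algebraMap k _ (β a b)) * X ^ 2) :
    2 ^ finrank k β.range ∣ finrank k (homology d) := by
  have hanti (v) : d * f v + f v * d = 0 := by
    rw [← hd v, ← hf v, ← mul_coeff_one, hP v.1 v.2]
    simp
  refine two_pow_finrank_range_dvd_finrank β (homologyMap f hanti) fun a b =>
    homologyMap_mul_self (K := (P (a, b)).coeff 2) ?_
  have h := congrArg (coeff · 2) (hP a b)
  simpa [coeff_mul, Finset.Nat.antidiagonal_succ, hd, hf, add_assoc] using h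

end Homology

section Markings

open Equiv Polynomial

theorem isLinearMap_coeff_one_prod {R ι : Type*} [CommRing R] (s : Finset ι) :
    IsLinearMap R fun v : ι → R => (∏ i ∈ s, C (v i) * X).coeff 1 := by
  simp_rw [Finset.prod_mul_distrib, Finset.prod_const, ← map_prod, coeff_C_mul, coeff_X_pow]
  split_ifs with hs
  · obtain ⟨i, rfl⟩ := Finset.card_eq_one.1 hs.symm
    exact ⟨by simp, by simp⟩
  · exact ⟨by simp, by simp⟩

theorem coeff_zero_prod_C_mul_X {R ι : Type*} [CommRing R] (s : Finset ι) (v : ι → R) :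
    (∏ i ∈ s, C (v i) * X).coeff 0 = if s = ∅ then 1 else 0 := by
  rw [coeff_zero_prod]
  split_ifs with hs
  · simp [hs]
  · obtain ⟨i, hi⟩ := Finset.nonempty_iff_ne_empty.2 hs
    exact Finset.prod_eq_zero hi (by simp)

variable {k ι κ : Type*} [CommRing k] [Fintype ι] [Fintype κ]

/-- The weight that a family of markings with scalars `v` gives to a square: the product of the
monomials `v i * X` over the markings `i` in that square. -/
noncomputable def markWeight (mark : ι → ZMod n × ZMod n) (v : ι → k) (s : ZMod n × ZMod n) :
    k[X] :=
  ∏ i, if mark i = s then C (v i) * X else 1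

theorem markWeight_sumElim (mark : ι → ZMod n × ZMod n) (mark' : κ → ZMod n × ZMod n)
    (v : ι → k) (v' : κ → k) (s : ZMod n × ZMod n) :
    markWeight (Sum.elim mark mark') (Sum.elim v v') s =
      markWeight mark v s * markWeight mark' v' s := by
  exact Fintype.prod_sum_type _

variable [NeZero n]

theorem boxWeight_markWeight (mark : ι → ZMod n × ZMod n) (v : ι → k) (a b p q : ZMod n) :
    boxWeight (markWeight mark v) a b p q =
      ∏ i with mark i ∈ arc a b ×ˢ arc p q, C (v i) * X := by
  simp only [boxWeight, markWeight]
  rw [Finset.prod_comm, Finset.prod_filter]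
  simp_rw [Finset.prod_ite_eq]

theorem prod_markWeight_column (σ : Perm (ZMod n)) (v : ZMod n → k) (a : ZMod n) :
    ∏ j, markWeight (fun i => (i, σ i)) v (a, j) = C (v a) * X := by
  simp only [markWeight]
  rw [Finset.prod_comm]
  simp [Prod.ext_iff, ite_and]

theorem prod_markWeight_row (σ : Perm (ZMod n)) (v : ZMod n → k) (i : ZMod n) :
    ∏ a, markWeight (fun i => (i, σ i)) v (a, σ i) = C (v i) * X := by
  simp only [markWeight]
  rw [Finset.prod_comm]
  simp [Prod.ext_iff, and_comm, ite_and]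

/-- The squares marked `X` and those marked `O` in a grid diagram, as one family. -/
def gridMark (σO σX : Perm (ZMod n)) : ZMod n ⊕ ZMod n → ZMod n × ZMod n :=
  Sum.elim (fun i => (i, σX i)) fun i => (i, σO i)

theorem sum_prod_markWeight_gridMark (σO σX : Perm (ZMod n)) (x o : ZMod n → k) :
    ∑ a, ∏ j, markWeight (gridMark σO σX) (Sum.elim x o) (a, j) +
        ∑ j, ∏ i, markWeight (gridMark σO σX) (Sum.elim x o) (i, j) =
      C (∑ i, (x i + x ((σX⁻¹ * σO) i)) * o i) * X ^ 2 := by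
  have hrow (i : ZMod n) : ∏ a, markWeight (fun i => (i, σX i)) x (a, σO i) =
      C (x ((σX⁻¹ * σO) i)) * X := by
    simpa using prod_markWeight_row σX x ((σX⁻¹ * σO) i)
  rw [← Equiv.sum_comp σO fun j => ∏ i, markWeight (gridMark σO σX) (Sum.elim x o) (i, j),
    ← Finset.sum_add_distrib, map_sum, Finset.sum_mul]
  refine Finset.sum_congr rfl fun i _ => ?_
  simp only [gridMark, markWeight_sumElim, Finset.prod_mul_distrib, prod_markWeight_column,
    prod_markWeight_row, hrow, map_add, map_mul]
  ring

end Markings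

section PairingRank

open Equiv Module

/-- The pairing `(x, o) ↦ ∑ i, (x i + x (π i)) * o i` on scalars attached to the `X`- and
`O`-markings of the columns; its rank is the number of columns minus that of orbits of `π`. -/
noncomputable def orbitPairing (k : Type*) [CommRing k] {ι : Type*} [Fintype ι] (π : Perm ι) :
    (ι → k) →ₗ[k] Dual k (ι → k) :=
  (dotProductEquiv k ι).toLinearMap ∘ₗ (LinearMap.id + LinearMap.funLeft k k π)

theorem eq_of_sameCycle {α β : Type*} {π : Perm α} {x : α → β} (hx : ∀ a, x (π a) = x a) {a b : α}
    (h : π.SameCycle a b) : x a = x b := by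
  obtain ⟨m, rfl⟩ := h
  induction m using Int.induction_on with
  | zero => rfl
  | succ m ih => rw [ih, add_comm, zpow_one_add, Perm.mul_apply, hx]
  | pred m ih =>
    rw [ih, ← hx ((π ^ (-(m : ℤ) - 1)) a), ← Perm.mul_apply, ← zpow_one_add, add_sub_cancel]

variable {k ι : Type*} [Field k] [CharP k 2] [Fintype ι]

theorem finrank_ker_orbitPairing_le (π : Perm ι) :
    finrank k (orbitPairing k π).ker ≤ numOrbits π := by
  have hle : (orbitPairing k π).ker ≤
      (LinearMap.funLeft k k (Quotient.mk (orbitSetoid π))).range := by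
    intro x hx
    have hx' : x + x ∘ π = 0 := (dotProductEquiv k ι).map_eq_zero_iff.1 hx
    exact ⟨Quotient.lift x fun a b h => eq_of_sameCycle
      (fun a => (CharTwo.add_eq_zero.1 (congrFun hx' a)).symm) h, rfl⟩
  calc finrank k (orbitPairing k π).ker
      ≤ finrank k (LinearMap.funLeft k k (Quotient.mk (orbitSetoid π))).range :=
        Submodule.finrank_mono hle
    _ ≤ finrank k (Quotient (orbitSetoid π) → k) := LinearMap.finrank_range_le _
    _ = numOrbits π := by rw [finrank_fintype_fun_eq_card, numOrbits, Nat.card_eq_fintype_card]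

theorem card_sub_numOrbits_le_finrank_range_orbitPairing (π : Perm ι) :
    Fintype.card ι - numOrbits π ≤ finrank k (orbitPairing k π).range := by
  have h := (orbitPairing k π).finrank_range_add_finrank_ker
  rw [finrank_fintype_fun_eq_card] at h
  have := finrank_ker_orbitPairing_le (k := k) π
  omega

end PairingRank

section GridPolynomial

open Equiv Module Polynomial

variable [NeZero n] {k ι : Type*} [CommRing k] [Fintype ι]

/-- The grid differential weighted by `markWeight mark v`, regarded as a polynomial whose
coefficients are endomorphisms of the module spanned by the generators. -/
noncomputable def gridPolynomial (mark : ι → ZMod n × ZMod n) (v : ι → k) :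
    (End k (Perm (ZMod n) →₀ k))[X] :=
  (matPolyEquiv (gridMatrix (markWeight mark v))).map
    (Matrix.toLinAlgEquiv (Finsupp.basisSingleOne (R := k))).toRingHom

variable {mark : ι → ZMod n × ZMod n} {v : ι → k}

theorem gridPolynomial_mul_self [CharP k 2] {c : k}
    (h : ∑ a, ∏ j, markWeight mark v (a, j) + ∑ j, ∏ i, markWeight mark v (i, j) = C c * X ^ 2) :
    gridPolynomial mark v * gridPolynomial mark v = C (algebraMap k _ c) * X ^ 2 := by
  rw [gridPolynomial, ← Polynomial.map_mul, ← map_mul, gridMatrix_mul_self, h,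
    matPolyEquiv_smul_one]
  simp

theorem coeff_gridPolynomial_single_apply (m : ℕ) (x y : Perm (ZMod n)) :
    (gridPolynomial mark v).coeff m (Finsupp.single x 1) y =
      ∑ q : ZMod n × ZMod n, if IsEmptyRect x y q.1 q.2 then
        (∏ i with mark i ∈ arc q.1 q.2 ×ˢ arc (x q.1) (x q.2), C (v i) * X).coeff m else 0 := by
  have h := Matrix.toLinAlgEquiv_self (Finsupp.basisSingleOne (R := k))
    ((matPolyEquiv (gridMatrix (markWeight mark v))).coeff m) x
  rw [Finsupp.coe_basisSingleOne] at h
  have hentry : (gridPolynomial mark v).coeff m (Finsupp.single x 1) y =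
      (gridMatrix (markWeight mark v) y x).coeff m := by
    simp [gridPolynomial, h, Finsupp.single_apply]
  simp only [hentry, gridMatrix, finsetSum_coeff, boxWeight_markWeight, apply_ite (coeff · m),
    coeff_zero]

theorem tildeDiff_single_apply (σO σX x y : Perm (ZMod n)) :
    tildeDiff σO σX (Finsupp.single x 1) y =
      ∑ q : ZMod n × ZMod n, if IsEmptyRect x y q.1 q.2 ∧
        (∀ i, (i, σO i) ∉ rectSquares x q.1 q.2) ∧ (∀ i, (i, σX i) ∉ rectSquares x q.1 q.2)
      then 1 else 0 := by
  simp only [tildeDiff, tildeImage, Finsupp.lsum_single, LinearMap.toSpanSingleton_apply, one_smul,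
    Finsupp.finsetSum_apply, Fintype.sum_prod_type]
  rw [Fintype.sum_eq_single y fun y' hy => ?_]
  · simp only [apply_ite (fun g : TildeC n => g y), Finsupp.single_eq_same, Finsupp.zero_apply]
  · simp only [apply_ite (fun g : TildeC n => g y), Finsupp.single_eq_of_ne' hy,
      Finsupp.zero_apply, ite_self, Finset.sum_const_zero]

theorem filter_gridMark_eq_empty_iff {σO σX x : Perm (ZMod n)} {a b : ZMod n} :
    Finset.univ.filter (gridMark σO σX · ∈ arc a b ×ˢ arc (x a) (x b)) = ∅ ↔
      (∀ i, (i, σO i) ∉ rectSquares x a b) ∧ ∀ i, (i, σX i) ∉ rectSquares x a b := by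
  simp [Finset.filter_eq_empty_iff, gridMark, rectSquares, mem_arc, and_comm]

theorem coeff_zero_gridPolynomial (σO σX : Perm (ZMod n)) (v : ZMod n ⊕ ZMod n → ZMod 2) :
    (gridPolynomial (gridMark σO σX) v).coeff 0 = tildeDiff σO σX := by
  ext x y
  simp only [LinearMap.comp_apply, Finsupp.lsingle_apply, coeff_gridPolynomial_single_apply,
    coeff_zero_prod_C_mul_X, tildeDiff_single_apply, ite_and (IsEmptyRect _ _ _ _),
    filter_gridMark_eq_empty_iff]

variable (mark) in
theorem isLinearMap_coeff_one_gridPolynomial :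
    IsLinearMap k fun v : ι → k => (gridPolynomial mark v).coeff 1 where
  map_add v w := by
    ext x y
    simp only [LinearMap.comp_apply, Finsupp.lsingle_apply, coeff_gridPolynomial_single_apply,
      (isLinearMap_coeff_one_prod _).map_add, LinearMap.add_apply, Finsupp.add_apply,
      ← Finset.sum_add_distrib, ite_add_ite, add_zero]
  map_smul c v := by
    ext x y
    simp only [LinearMap.comp_apply, Finsupp.lsingle_apply, coeff_gridPolynomial_single_apply,
      (isLinearMap_coeff_one_prod _).map_smul, LinearMap.smul_apply, Finsupp.smul_apply,
      Finset.smul_sum, smul_ite, smul_zero]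

end GridPolynomial

theorem tildeHomology_dim_divisible (n : ℕ) [NeZero n]
    (σO σX : Equiv.Perm (ZMod n)) :
    2 ^ (n - numOrbits (σX⁻¹ * σO)) ∣
      Module.finrank (ZMod 2) (tildeHomology n σO σX) := by
  let f : (ZMod n → ZMod 2) × (ZMod n → ZMod 2) →ₗ[ZMod 2] Module.End (ZMod 2) (TildeC n) :=
    (isLinearMap_coeff_one_gridPolynomial (gridMark σO σX)).mk' ∘ₗ
      (LinearEquiv.sumArrowLequivProdArrow _ _ (ZMod 2) (ZMod 2)).symm.toLinearMap
  have hrank : n - numOrbits (σX⁻¹ * σO) ≤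
      Module.finrank (ZMod 2) (orbitPairing (ZMod 2) (σX⁻¹ * σO)).range := by
    simpa only [ZMod.card] using
      card_sub_numOrbits_le_finrank_range_orbitPairing (σX⁻¹ * σO)
  refine (pow_dvd_pow 2 hrank).trans ?_
  exact two_pow_finrank_range_dvd_finrank_homology (orbitPairing (ZMod 2) (σX⁻¹ * σO))
    (f := f) (P := fun v => gridPolynomial (gridMark σO σX) (Sum.elim v.1 v.2))
    (fun _ => coeff_zero_gridPolynomial σO σX _) (fun _ => rfl)
    fun x o => gridPolynomial_mul_self (sum_prod_markWeight_gridMark σO σX x o)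

end GridDiagrams
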